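/- Let n ≥ 1 and 1 ≤ m ≤ n be integers, and let α, β > −1 and γ > 0 be real numbers. Then the Aomoto–Selberg average satisfies ( ∫_{[0,1]^n} x₁x₂⋯x_m · |Δ_n(x)|^{2γ} ∏_{j=1}^n x_j^α (1−x_j)^β dx ) / ( ∫_{[0,1]^n} |Δ_n(x)|^{2γ} ∏_{j=1}^n x_j^α (1−x_j)^β dx ) = ∏_{j=1}^m ( α + 1 + (n−j)γ ) / ( α + β + 2 + (2n−j−1)γ ). -/

import Mathlib

open MeasureTheory Filter Real
open scoped BigOperators Topology

noncomputable section

/-- Vandermonde determinant `Δ_n(x) = ∏_{i<j} (x_i - x_j)`. -/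
def vdm {n : ℕ} (x : Fin n → ℝ) : ℝ :=
  ∏ i : Fin n, ∏ j ∈ Finset.Ioi i, (x i - x j)

/-!
Aomoto's argument. Write `φ` for the Selberg density and `⟨S⟩` for the integral of `∏ l ∈ S, x l`
against `φ`. For `i ∉ S` the total derivative in `x i` of `x i * (1 - x i) * (∏ l ∈ S, x l) * φ x`
integrates to zero, which gives
`(α + 1) ⟨S⟩ - (α + β + 2) ⟨S ∪ {i}⟩ + 2 γ ∑ j ≠ i, K j = 0`, where `K j` is the integral of
`x i * (1 - x i) * (∏ l ∈ S, x l) * φ x / (x i - x j)`. Averaging the integrand with its image under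
`x i ↔ x j` cancels the denominator, so `2 K j` is `-⟨S ∪ {i}⟩` if `j ∈ S` and
`⟨S⟩ - 2 ⟨S ∪ {i}⟩` otherwise. The result is a first-order recursion in the size of `S`.
-/

/-! ### Product measures and products over finite sets -/

section Pi

variable {X : Type*} [MeasurableSpace X] {μ : Measure X} [SigmaFinite μ] {E : Type*}
  [NormedAddCommGroup E]

section Perm

variable {ι : Type*} [Fintype ι] (σ : Equiv.Perm ι)

lemma integral_pi_comp_perm [NormedSpace ℝ E] (F : (ι → X) → E) :
    ∫ x, F (x ∘ σ) ∂(Measure.pi fun _ => μ) = ∫ x, F x ∂(Measure.pi fun _ => μ) :=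
  (measurePreserving_arrowCongr' (fun _ : ι => μ) (fun _ => μ) σ.symm
    (MeasurableEquiv.refl X) fun _ => MeasurePreserving.id μ).integral_comp' F

lemma integrable_pi_comp_perm {F : (ι → X) → E} (hF : Integrable F (Measure.pi fun _ => μ)) :
    Integrable (fun x => F (x ∘ σ)) (Measure.pi fun _ => μ) :=
  (measurePreserving_arrowCongr' (fun _ : ι => μ) (fun _ => μ) σ.symm
    (MeasurableEquiv.refl X) fun _ => MeasurePreserving.id μ).integrable_comp_of_integrable hF

lemma two_mul_integral_pi_eq_integral_add_comp_perm {F : (ι → X) → ℝ}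
    (hF : Integrable F (Measure.pi fun _ => μ)) :
    2 * ∫ x, F x ∂(Measure.pi fun _ => μ) =
      ∫ x, (F x + F (x ∘ σ)) ∂(Measure.pi fun _ => μ) := by
  rw [integral_add hF (integrable_pi_comp_perm σ hF), integral_pi_comp_perm, two_mul]

end Perm

variable {n : ℕ} (i : Fin (n + 1)) {F : (Fin (n + 1) → X) → E}

lemma integrable_comp_insertNth_iff :
    Integrable (fun p : X × (Fin n → X) => F (i.insertNth p.1 p.2))
      (μ.prod (Measure.pi fun _ => μ)) ↔ Integrable F (Measure.pi fun _ => μ) :=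
  (measurePreserving_piFinSuccAbove (fun _ : Fin (n + 1) => μ) i).symm.integrable_comp_emb
    (MeasurableEquiv.measurableEmbedding _)

lemma integral_pi_eq_integral_integral_insertNth [NormedSpace ℝ E]
    (hF : Integrable F (Measure.pi fun _ => μ)) :
    ∫ x, F x ∂(Measure.pi fun _ => μ) =
      ∫ y, ∫ t, F (i.insertNth t y) ∂μ ∂(Measure.pi fun _ => μ) := by
  rw [← (measurePreserving_piFinSuccAbove (fun _ : Fin (n + 1) => μ) i).symm.integral_comp' F]
  exact integral_prod_symm _ ((integrable_comp_insertNth_iff i).2 hF)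

end Pi

lemma prod_comp_swap_of_notMem {M ι : Type*} [CommMonoid M] [DecidableEq ι] {S : Finset ι}
    {i j : ι} (hi : i ∉ S) (hj : j ∉ S) (x : ι → M) :
    ∏ l ∈ S, (x ∘ Equiv.swap i j) l = ∏ l ∈ S, x l :=
  Finset.prod_congr rfl fun _ hl => congrArg x <|
    Equiv.swap_apply_of_ne_of_ne (ne_of_mem_of_not_mem hl hi) (ne_of_mem_of_not_mem hl hj)

lemma prod_insertNth_of_notMem {M : Type*} [CommMonoid M] {n : ℕ} {i : Fin (n + 1)}
    {S : Finset (Fin (n + 1))} (hi : i ∉ S) (t : M) (y : Fin n → M) :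
    ∏ l ∈ S, (i.insertNth t y : Fin (n + 1) → M) l = ∏ l with i.succAbove l ∈ S, y l := by
  rw [← Finset.prod_ite_mem_eq, Fin.prod_univ_succAbove _ i, Finset.prod_filter]
  simp [hi]

/-! ### The Vandermonde product -/

section Vandermonde

variable {n : ℕ}

lemma abs_vdm (x : Fin n → ℝ) : |vdm x| = |(Matrix.vandermonde x).det| := by
  simp only [Matrix.det_vandermonde, vdm, Finset.abs_prod, abs_sub_comm]

lemma abs_vdm_comp_perm (x : Fin n → ℝ) (σ : Equiv.Perm (Fin n)) : |vdm (x ∘ σ)| = |vdm x| := by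
  have hperm : Matrix.vandermonde (x ∘ σ) = (Matrix.vandermonde x).submatrix σ id := rfl
  rw [abs_vdm, abs_vdm, hperm]
  exact Matrix.abs_det_submatrix_equiv_equiv σ (Equiv.refl _) _

lemma vdm_ne_zero_iff {x : Fin n → ℝ} : vdm x ≠ 0 ↔ Function.Injective x := by
  rw [← abs_ne_zero, abs_vdm, abs_ne_zero, Matrix.det_vandermonde_ne_zero_iff]

lemma continuous_vdm : Continuous (vdm : (Fin n → ℝ) → ℝ) := by
  unfold vdm
  fun_prop

lemma vdm_cons (t : ℝ) (y : Fin n → ℝ) :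
    vdm (Fin.cons t y : Fin (n + 1) → ℝ) = (∏ j, (t - y j)) * vdm y := by
  simp only [vdm, Fin.prod_univ_succ, Fin.prod_Ioi_zero, Fin.prod_Ioi_succ, Fin.cons_zero,
    Fin.cons_succ]

lemma abs_vdm_insertNth (i : Fin (n + 1)) (t : ℝ) (y : Fin n → ℝ) :
    |vdm (i.insertNth t y : Fin (n + 1) → ℝ)| = (∏ j, |t - y j|) * |vdm y| := by
  rw [← abs_vdm_comp_perm _ i.cycleRange.symm, Fin.insertNth_comp_cycleRange_symm, vdm_cons,
    abs_mul, Finset.abs_prod]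

lemma abs_sub_le_one {s t : ℝ} (hs : s ∈ Set.Ioo (0 : ℝ) 1) (ht : t ∈ Set.Ioo (0 : ℝ) 1) :
    |s - t| ≤ 1 :=
  abs_sub_le_iff.2 ⟨by linarith [hs.2, ht.1], by linarith [hs.1, ht.2]⟩

lemma abs_vdm_le_one {x : Fin n → ℝ} (hx : ∀ i, x i ∈ Set.Ioo (0 : ℝ) 1) : |vdm x| ≤ 1 := by
  simp only [vdm, Finset.abs_prod]
  exact Finset.prod_le_one (fun _ _ => Finset.prod_nonneg fun _ _ => abs_nonneg _) fun i _ =>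
    Finset.prod_le_one (fun _ _ => abs_nonneg _) fun j _ => abs_sub_le_one (hx i) (hx j)

end Vandermonde

/-! ### The unit cube -/

/-- Lebesgue measure on the unit cube of `ℝⁿ`, as a product measure. The open interval is used so
that the weights `t ^ α * (1 - t) ^ β` are positive on all of it. -/
abbrev unitCubeMeasure (n : ℕ) : Measure (Fin n → ℝ) :=
  Measure.pi fun _ => volume.restrict (Set.Ioo (0 : ℝ) 1)

section UnitCube

variable {n : ℕ}

lemma unitCubeMeasure_eq_restrict_Ioo : unitCubeMeasure n =
    (volume : Measure (Fin n → ℝ)).restrict (Set.univ.pi fun _ => Set.Ioo (0 : ℝ) 1) := by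
  rw [volume_pi, Measure.restrict_pi_pi]

lemma unitCubeMeasure_eq_restrict_Icc : unitCubeMeasure n =
    (volume : Measure (Fin n → ℝ)).restrict (Set.univ.pi fun _ => Set.Icc (0 : ℝ) 1) := by
  rw [unitCubeMeasure_eq_restrict_Ioo]
  exact Measure.restrict_congr_set Measure.pi_Ioo_ae_eq_pi_Icc

lemma ae_unitCubeMeasure_mem_Ioo : ∀ᵐ x ∂unitCubeMeasure n, ∀ i, x i ∈ Set.Ioo (0 : ℝ) 1 := by
  rw [unitCubeMeasure_eq_restrict_Ioo]
  filter_upwards [ae_restrict_mem (MeasurableSet.univ_pi fun _ => measurableSet_Ioo)] with x hx i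
  exact hx i (Set.mem_univ i)

lemma integrable_prod_mul_unitCubeMeasure {F : (Fin n → ℝ) → ℝ}
    (hF : Integrable F (unitCubeMeasure n)) (S : Finset (Fin n)) :
    Integrable (fun x => (∏ l ∈ S, x l) * F x) (unitCubeMeasure n) := by
  refine hF.bdd_mul (c := 1) (by fun_prop) ?_
  filter_upwards [ae_unitCubeMeasure_mem_Ioo] with x hx
  rw [Real.norm_of_nonneg (Finset.prod_nonneg fun l _ => (hx l).1.le)]
  exact Finset.prod_le_one (fun l _ => (hx l).1.le) fun l _ => (hx l).2.le

end UnitCube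

/-! ### The Selberg density -/

/-- The unnormalised Selberg density `|Δ_n(x)|^{2γ} ∏ x_j^α (1 - x_j)^β`. -/
def selbergDensity (α β γ : ℝ) {n : ℕ} (x : Fin n → ℝ) : ℝ :=
  |vdm x| ^ (2 * γ) * ∏ j, (x j ^ α * (1 - x j) ^ β)

lemma rpow_mul_one_sub_rpow_pos (α β : ℝ) {t : ℝ} (ht : t ∈ Set.Ioo (0 : ℝ) 1) :
    0 < t ^ α * (1 - t) ^ β :=
  mul_pos (rpow_pos_of_pos ht.1 α) (rpow_pos_of_pos (sub_pos.2 ht.2) β)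

lemma integrableOn_rpow_mul_one_sub_rpow {α β : ℝ} (hα : -1 < α) (hβ : -1 < β) :
    IntegrableOn (fun t : ℝ => t ^ α * (1 - t) ^ β) (Set.Ioo 0 1) := by
  have hbeta := Complex.betaIntegral_convergent (u := α + 1) (v := β + 1)
    (by simpa using neg_lt_iff_pos_add.1 hα) (by simpa using neg_lt_iff_pos_add.1 hβ)
  rw [intervalIntegrable_iff_integrableOn_Ioo_of_le zero_le_one] at hbeta
  refine IntegrableOn.congr_fun hbeta.norm (fun t ht => ?_) measurableSet_Ioo
  have hsub : (1 : ℂ) - t = ((1 - t : ℝ) : ℂ) := by push_cast; rfl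
  rw [norm_mul, hsub, Complex.norm_cpow_eq_rpow_re_of_pos ht.1,
    Complex.norm_cpow_eq_rpow_re_of_pos (sub_pos.2 ht.2)]
  simp

section SelbergDensity

variable {α β γ : ℝ} {n : ℕ} {x : Fin n → ℝ}

lemma selbergDensity_comp_perm (x : Fin n → ℝ) (σ : Equiv.Perm (Fin n)) :
    selbergDensity α β γ (x ∘ σ) = selbergDensity α β γ x := by
  rw [selbergDensity, abs_vdm_comp_perm, selbergDensity,
    ← Equiv.prod_comp σ fun j => x j ^ α * (1 - x j) ^ β]
  rfl

lemma selbergDensity_eq_zero_of_eq (hγ : γ ≠ 0) {i j : Fin n} (hij : i ≠ j) (hx : x i = x j) :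
    selbergDensity α β γ x = 0 := by
  have hvdm : vdm x = 0 := by
    by_contra hne
    exact hij (vdm_ne_zero_iff.1 hne hx)
  simp [selbergDensity, hvdm, hγ]

lemma selbergDensity_nonneg (hx : ∀ i, x i ∈ Set.Ioo (0 : ℝ) 1) : 0 ≤ selbergDensity α β γ x :=
  mul_nonneg (rpow_nonneg (abs_nonneg _) _)
    (Finset.prod_nonneg fun i _ => (rpow_mul_one_sub_rpow_pos α β (hx i)).le)

lemma selbergDensity_pos (hx : ∀ i, x i ∈ Set.Ioo (0 : ℝ) 1) (hinj : Function.Injective x) :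
    0 < selbergDensity α β γ x :=
  mul_pos (rpow_pos_of_pos (abs_pos.2 (vdm_ne_zero_iff.2 hinj)) _)
    (Finset.prod_pos fun i _ => rpow_mul_one_sub_rpow_pos α β (hx i))

@[fun_prop]
lemma measurable_selbergDensity : Measurable (selbergDensity α β γ : (Fin n → ℝ) → ℝ) := by
  have hvdm : Measurable (vdm : (Fin n → ℝ) → ℝ) := continuous_vdm.measurable
  unfold selbergDensity
  fun_prop

lemma integrable_selbergDensity (hα : -1 < α) (hβ : -1 < β) (hγ : 0 ≤ γ) :
    Integrable (selbergDensity α β γ) (unitCubeMeasure n) := by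
  have hweight : Integrable (fun x : Fin n → ℝ => ∏ j, (x j ^ α * (1 - x j) ^ β))
      (unitCubeMeasure n) :=
    Integrable.fintype_prod fun _ => integrableOn_rpow_mul_one_sub_rpow hα hβ
  refine hweight.bdd_mul (c := 1) (f := fun x => |vdm x| ^ (2 * γ)) ?_ ?_
  · exact ((continuous_vdm.abs).measurable.pow_const _).aestronglyMeasurable
  · filter_upwards [ae_unitCubeMeasure_mem_Ioo] with x hx
    rw [Real.norm_of_nonneg (rpow_nonneg (abs_nonneg _) _)]
    exact rpow_le_one (abs_nonneg _) (abs_vdm_le_one hx) (by positivity)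

lemma exists_injective_mem_Ioo (n : ℕ) :
    ∃ x : Fin n → ℝ, (∀ i, x i ∈ Set.Ioo (0 : ℝ) 1) ∧ Function.Injective x := by
  let e := (Set.Ioo_infinite (zero_lt_one' ℝ)).natEmbedding
  exact ⟨fun i => e i, fun i => (e i).2, fun i j hij =>
    Fin.ext (e.injective (Subtype.ext hij))⟩

lemma integral_selbergDensity_pos (hα : -1 < α) (hβ : -1 < β) (hγ : 0 ≤ γ) :
    0 < ∫ x, selbergDensity α β γ x ∂unitCubeMeasure n := by
  have hnonneg : 0 ≤ᵐ[unitCubeMeasure n] selbergDensity α β γ := by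
    filter_upwards [ae_unitCubeMeasure_mem_Ioo] with x hx using selbergDensity_nonneg hx
  rw [integral_pos_iff_support_of_nonneg_ae hnonneg (integrable_selbergDensity hα hβ hγ),
    unitCubeMeasure_eq_restrict_Ioo,
    Measure.restrict_apply' (MeasurableSet.univ_pi fun _ => measurableSet_Ioo)]
  have hopen : IsOpen ((Set.univ.pi fun _ : Fin n => Set.Ioo (0 : ℝ) 1) ∩ {x | vdm x ≠ 0}) :=
    (isOpen_set_pi Set.finite_univ fun _ _ => isOpen_Ioo).inter
      (isOpen_ne_fun continuous_vdm continuous_const)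
  obtain ⟨x₀, hx₀, hinj⟩ := exists_injective_mem_Ioo n
  refine (hopen.measure_pos volume ⟨x₀, fun i _ => hx₀ i, vdm_ne_zero_iff.2 hinj⟩).trans_le
    (measure_mono ?_)
  rintro x ⟨hx, hvdm⟩
  exact ⟨(selbergDensity_pos (fun i => hx i (Set.mem_univ i)) (vdm_ne_zero_iff.1 hvdm)).ne', hx⟩

end SelbergDensity

/-! ### One-variable slices of the density -/

/-- The dependence of the Selberg density on a single variable `t`, the other variables `y` being
fixed: `t^α (1 - t)^β ∏ |t - y_j|^{2γ}`. -/
def selbergSlice (α β γ : ℝ) {ι : Type*} [Fintype ι] (y : ι → ℝ) (t : ℝ) : ℝ :=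
  t ^ α * (1 - t) ^ β * ∏ j, |t - y j| ^ (2 * γ)

lemma selbergDensity_insertNth (α β γ : ℝ) {n : ℕ} (i : Fin (n + 1)) (t : ℝ) (y : Fin n → ℝ) :
    selbergDensity α β γ (i.insertNth t y : Fin (n + 1) → ℝ) =
      selbergSlice α β γ y t * selbergDensity α β γ y := by
  rw [selbergDensity, abs_vdm_insertNth, Fin.prod_univ_succAbove _ i,
    mul_rpow (Finset.prod_nonneg fun _ _ => abs_nonneg _) (abs_nonneg _),
    ← Real.finsetProd_rpow _ _ fun _ _ => abs_nonneg _]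
  simp only [Fin.insertNth_apply_same, Fin.insertNth_apply_succAbove, selbergSlice, selbergDensity]
  ring

section SelbergSlice

variable {α β γ : ℝ} {ι : Type*} [Fintype ι] {y : ι → ℝ} {t : ℝ}

lemma selbergSlice_add_one (ht : t ∈ Set.Ioo (0 : ℝ) 1) :
    selbergSlice (α + 1) (β + 1) γ y t = t * (1 - t) * selbergSlice α β γ y t := by
  rw [selbergSlice, rpow_add_one ht.1.ne', rpow_add_one (sub_pos.2 ht.2).ne', selbergSlice]
  ring

lemma selbergSlice_nonneg (ht : t ∈ Set.Ioo (0 : ℝ) 1) : 0 ≤ selbergSlice α β γ y t :=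
  mul_nonneg (rpow_mul_one_sub_rpow_pos α β ht).le
    (Finset.prod_nonneg fun _ _ => rpow_nonneg (abs_nonneg _) _)

lemma selbergSlice_le_abs_sub_rpow (hα : 0 ≤ α) (hβ : 0 ≤ β) (hγ : 0 ≤ γ)
    (ht : t ∈ Set.Ioo (0 : ℝ) 1) (hy : ∀ j, y j ∈ Set.Ioo (0 : ℝ) 1) (j : ι) :
    selbergSlice α β γ y t ≤ |t - y j| ^ (2 * γ) := by
  classical
  have hweight : t ^ α * (1 - t) ^ β ≤ 1 :=
    mul_le_one₀ (rpow_le_one ht.1.le ht.2.le hα) (rpow_nonneg (sub_pos.2 ht.2).le _)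
      (rpow_le_one (sub_pos.2 ht.2).le (by linarith [ht.1]) hβ)
  have hrest : ∏ l ∈ Finset.univ.erase j, |t - y l| ^ (2 * γ) ≤ 1 :=
    Finset.prod_le_one (fun _ _ => rpow_nonneg (abs_nonneg _) _) fun l _ =>
      rpow_le_one (abs_nonneg _) (abs_sub_le_one ht (hy l)) (by positivity)
  have hprod : 0 ≤ ∏ l, |t - y l| ^ (2 * γ) :=
    Finset.prod_nonneg fun _ _ => rpow_nonneg (abs_nonneg _) _
  calc selbergSlice α β γ y t ≤ ∏ l, |t - y l| ^ (2 * γ) := mul_le_of_le_one_left hprod hweight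
    _ = |t - y j| ^ (2 * γ) * ∏ l ∈ Finset.univ.erase j, |t - y l| ^ (2 * γ) :=
      (Finset.mul_prod_erase _ _ (Finset.mem_univ j)).symm
    _ ≤ |t - y j| ^ (2 * γ) := mul_le_of_le_one_right (rpow_nonneg (abs_nonneg _) _) hrest

lemma continuous_selbergSlice (hα : 0 ≤ α) (hβ : 0 ≤ β) (hγ : 0 ≤ γ) :
    Continuous (selbergSlice α β γ y) := by
  unfold selbergSlice
  have hγ' : 0 ≤ 2 * γ := by positivity
  fun_prop (disch := grind)

lemma selbergSlice_eq_exp (ht : t ∈ Set.Ioo (0 : ℝ) 1) (hty : t ∉ Set.range y) :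
    selbergSlice α β γ y t =
      exp (α * log t + β * log (1 - t) + ∑ j, 2 * γ * log (t - y j)) := by
  have hne : ∀ j, t - y j ≠ 0 := fun j h => hty ⟨j, (sub_eq_zero.1 h).symm⟩
  rw [exp_add, exp_add, exp_sum, selbergSlice, rpow_def_of_pos ht.1,
    rpow_def_of_pos (sub_pos.2 ht.2), mul_comm α, mul_comm β]
  congr 1
  refine Finset.prod_congr rfl fun j _ => ?_
  rw [rpow_def_of_pos (abs_pos.2 (hne j)), log_abs, mul_comm]

lemma hasDerivAt_selbergSlice (ht : t ∈ Set.Ioo (0 : ℝ) 1) (hty : t ∉ Set.range y) :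
    HasDerivAt (selbergSlice α β γ y)
      (selbergSlice α β γ y t * (α / t - β / (1 - t) + ∑ j, 2 * γ / (t - y j))) t := by
  have hne : ∀ j, t - y j ≠ 0 := fun j h => hty ⟨j, (sub_eq_zero.1 h).symm⟩
  have hlog : HasDerivAt
      (fun u => α * log u + β * log (1 - u) + ∑ j, 2 * γ * log (u - y j))
      (α * (1 / t) + β * (-1 / (1 - t)) + ∑ j, 2 * γ * (1 / (t - y j))) t :=
    ((((hasDerivAt_id t).log ht.1.ne').const_mul α).add
      ((((hasDerivAt_id t).const_sub 1).log (sub_pos.2 ht.2).ne').const_mul β)).add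
      (HasDerivAt.fun_sum fun j _ => (((hasDerivAt_id t).sub_const (y j)).log (hne j)).const_mul _)
  have hev : selbergSlice α β γ y =ᶠ[𝓝 t]
      fun u => exp (α * log u + β * log (1 - u) + ∑ j, 2 * γ * log (u - y j)) := by
    filter_upwards [isOpen_Ioo.mem_nhds ht,
      (Set.finite_range y).isClosed.isOpen_compl.mem_nhds hty] with u hu huy
    exact selbergSlice_eq_exp hu huy
  refine (hlog.exp.congr_of_eventuallyEq hev).congr_deriv ?_
  rw [← selbergSlice_eq_exp ht hty]
  simp only [mul_one_div, neg_div, mul_neg, ← sub_eq_add_neg]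

/-- The derivative of `t (1 - t)` times the slice at `t`, valid away from `0`, `1` and the `y j`. -/
def selbergSliceDeriv (α β γ : ℝ) {ι : Type*} [Fintype ι] (y : ι → ℝ) (t : ℝ) : ℝ :=
  (α + 1 - (α + β + 2) * t + 2 * γ * ∑ j, t * (1 - t) / (t - y j)) * selbergSlice α β γ y t

lemma hasDerivAt_selbergSlice_add_one (ht : t ∈ Set.Ioo (0 : ℝ) 1) (hty : t ∉ Set.range y) :
    HasDerivAt (selbergSlice (α + 1) (β + 1) γ y) (selbergSliceDeriv α β γ y t) t := by
  refine (hasDerivAt_selbergSlice ht hty).congr_deriv ?_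
  have ht0 : t ≠ 0 := ht.1.ne'
  have ht1 : 1 - t ≠ 0 := (sub_pos.2 ht.2).ne'
  rw [selbergSlice_add_one ht, selbergSliceDeriv]
  simp only [div_eq_mul_inv _ (t - _), ← Finset.mul_sum]
  field_simp
  ring

lemma integral_selbergSliceDeriv_eq_zero (hα : -1 < α) (hβ : -1 < β) (hγ : 0 ≤ γ)
    (hint : IntegrableOn (selbergSliceDeriv α β γ y) (Set.Ioo 0 1)) :
    ∫ t in Set.Ioo (0 : ℝ) 1, selbergSliceDeriv α β γ y t = 0 := by
  have hα' : 0 < α + 1 := neg_lt_iff_pos_add.1 hα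
  have hβ' : 0 < β + 1 := neg_lt_iff_pos_add.1 hβ
  rw [← integral_Ioc_eq_integral_Ioo, ← intervalIntegral.integral_of_le zero_le_one,
    integral_eq_of_hasDerivAt_off_countable_of_le (selbergSlice (α + 1) (β + 1) γ y) _
      zero_le_one (Set.countable_range y)
      (continuous_selbergSlice hα'.le hβ'.le hγ).continuousOn
      (fun t ht => hasDerivAt_selbergSlice_add_one ht.1 ht.2)
      ((intervalIntegrable_iff_integrableOn_Ioo_of_le zero_le_one).2 hint)]
  simp [selbergSlice, zero_rpow hα'.ne', zero_rpow hβ'.ne']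

end SelbergSlice

/-! ### Integrability of the singular terms -/

lemma integrableOn_abs_rpow {r : ℝ} (hr : -1 < r) :
    IntegrableOn (fun u : ℝ => |u| ^ r) (Set.Ioo (-1) 1) := by
  have hpos : IntervalIntegrable (fun u : ℝ => |u| ^ r) volume 0 1 := by
    refine (intervalIntegral.intervalIntegrable_rpow' hr).congr fun u hu => ?_
    rw [Set.uIoc_of_le zero_le_one] at hu
    simp only [abs_of_pos hu.1]
  have hneg : IntervalIntegrable (fun u : ℝ => |u| ^ r) volume (-1) 0 := by
    rw [IntervalIntegrable.iff_comp_neg]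
    simpa using hpos.symm
  exact (intervalIntegrable_iff_integrableOn_Ioo_of_le (by norm_num)).1 (hneg.trans hpos)

lemma integrable_comp_sub_mul {Y : Type*} [MeasurableSpace Y] {ν : Measure Y} [SFinite ν]
    {k : ℝ → ℝ} (hk : Integrable k) {g : Y → ℝ} (hg : Integrable g ν) {f : Y → ℝ}
    (hf : Measurable f) :
    Integrable (fun p : ℝ × Y => k (p.1 - f p.2) * g p.2) (volume.prod ν) := by
  have hshear : MeasurePreserving (fun p : Y × ℝ => (p.1, p.2 - f p.1)) (ν.prod volume)
      (ν.prod volume) :=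
    (MeasurePreserving.id ν).skew_product (g := fun y t => t - f y)
      (measurable_snd.sub (hf.comp measurable_fst))
      (Eventually.of_forall fun y => (measurePreserving_sub_right volume (f y)).map_eq)
  have hswap := (hshear.integrable_comp_of_integrable (hg.mul_prod hk)).swap
  simpa only [Function.comp_def, Prod.fst_swap, Prod.snd_swap, mul_comm (g _)] using hswap

/-- The term with denominator `x_i - x_j` in Aomoto's integration by parts in the variable `x_i`,
for the monomial `∏ l ∈ S, x l`. It is `0` on the hyperplane `x_i = x_j`, since `a / 0 = 0`. -/
def aomotoKernel (α β γ : ℝ) {n : ℕ} (S : Finset (Fin n)) (i j : Fin n) (x : Fin n → ℝ) : ℝ :=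
  (∏ l ∈ S, x l) * (x i * (1 - x i)) * selbergDensity α β γ x / (x i - x j)

section AomotoKernel

variable {α β γ : ℝ} {n : ℕ}

lemma abs_selbergDensity_div_sub_le (hα : -1 < α) (hβ : -1 < β) (hγ : 0 ≤ γ)
    {x : Fin (n + 1) → ℝ} (hx : ∀ l, x l ∈ Set.Ioo (0 : ℝ) 1) (i : Fin (n + 1)) (j : Fin n) :
    |x i * (1 - x i) * selbergDensity α β γ x / (x i - x (i.succAbove j))| ≤
      |x i - x (i.succAbove j)| ^ (2 * γ - 1) * selbergDensity α β γ (i.removeNth x) := by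
  have hy : ∀ l, i.removeNth x l ∈ Set.Ioo (0 : ℝ) 1 := fun l => hx _
  have hφ : 0 ≤ selbergDensity α β γ (i.removeNth x) := selbergDensity_nonneg hy
  rcases eq_or_ne (x i) (x (i.succAbove j)) with heq | hne
  · rw [heq, sub_self, div_zero, abs_zero]
    positivity
  have hpos : 0 < |x i - x (i.succAbove j)| := abs_pos.2 (sub_ne_zero.2 hne)
  have hfactor : x i * (1 - x i) * selbergDensity α β γ x =
      selbergSlice (α + 1) (β + 1) γ (i.removeNth x) (x i) *
        selbergDensity α β γ (i.removeNth x) := by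
    rw [selbergSlice_add_one (hx i), mul_assoc _ (selbergSlice ..), ← selbergDensity_insertNth,
      Fin.insertNth_self_removeNth]
  rw [hfactor, abs_div, abs_of_nonneg (mul_nonneg (selbergSlice_nonneg (hx i)) hφ),
    rpow_sub_one hpos.ne', div_mul_eq_mul_div]
  gcongr
  exact selbergSlice_le_abs_sub_rpow (by linarith) (by linarith) hγ (hx i) hy j

lemma integrable_selbergDensity_div_sub (hα : -1 < α) (hβ : -1 < β) (hγ : 0 < γ)
    (i : Fin (n + 1)) (j : Fin n) :
    Integrable (fun x => x i * (1 - x i) * selbergDensity α β γ x / (x i - x (i.succAbove j)))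
      (unitCubeMeasure (n + 1)) := by
  have hkernel := (integrableOn_abs_rpow (r := 2 * γ - 1) (by linarith)).integrable_indicator
    measurableSet_Ioo
  have hprod := (integrable_comp_sub_mul hkernel
    (integrable_selbergDensity hα hβ hγ.le (n := n)) (measurable_pi_apply j)).mono_measure
    (Measure.prod_mono (Measure.restrict_le_self (s := Set.Ioo (0 : ℝ) 1)) le_rfl)
  have hdom := (measurePreserving_piFinSuccAbove
    (fun _ => volume.restrict (Set.Ioo (0 : ℝ) 1)) i).integrable_comp_of_integrable hprod
  refine hdom.mono' (Measurable.aestronglyMeasurable (by fun_prop)) ?_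
  filter_upwards [ae_unitCubeMeasure_mem_Ioo] with x hx
  have hmem : x i - x (i.succAbove j) ∈ Set.Ioo (-1 : ℝ) 1 :=
    ⟨by linarith [(hx i).1, (hx (i.succAbove j)).2], by linarith [(hx i).2, (hx (i.succAbove j)).1]⟩
  refine (abs_selbergDensity_div_sub_le hα hβ hγ.le hx i j).trans_eq ?_
  exact congrArg (· * _) (Set.indicator_of_mem hmem fun u => |u| ^ (2 * γ - 1)).symm

lemma integrable_aomotoKernel (hα : -1 < α) (hβ : -1 < β) (hγ : 0 < γ)
    (S : Finset (Fin (n + 1))) {i j : Fin (n + 1)} (hji : j ≠ i) :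
    Integrable (aomotoKernel α β γ S i j) (unitCubeMeasure (n + 1)) := by
  obtain ⟨j, rfl⟩ := Fin.exists_succAbove_eq hji
  refine (integrable_prod_mul_unitCubeMeasure
    (integrable_selbergDensity_div_sub hα hβ hγ i j) S).congr (Eventually.of_forall fun x => ?_)
  simp only [aomotoKernel, mul_assoc, mul_div_assoc]

end AomotoKernel

/-! ### Aomoto's recursion -/

/-- The unnormalised average of the monomial `∏ l ∈ S, x l` against the Selberg density. -/
def selbergMoment (α β γ : ℝ) {n : ℕ} (S : Finset (Fin n)) : ℝ :=
  ∫ x, (∏ l ∈ S, x l) * selbergDensity α β γ x ∂unitCubeMeasure n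

/-- The derivative in `x_i` of `x_i (1 - x_i) (∏ l ∈ S, x l)` times the Selberg density, for
`i ∉ S`, as a combination of monomials times the density and of singular terms. -/
def aomotoDeriv (α β γ : ℝ) {n : ℕ} (S : Finset (Fin n)) (i : Fin n) (x : Fin n → ℝ) : ℝ :=
  (α + 1) * ((∏ l ∈ S, x l) * selbergDensity α β γ x) -
    (α + β + 2) * ((∏ l ∈ insert i S, x l) * selbergDensity α β γ x) +
    2 * γ * ∑ j ∈ {i}ᶜ, aomotoKernel α β γ S i j x

section Recursion

variable {α β γ : ℝ} {n : ℕ}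

lemma integrable_prod_mul_selbergDensity (hα : -1 < α) (hβ : -1 < β) (hγ : 0 ≤ γ)
    (S : Finset (Fin n)) :
    Integrable (fun x => (∏ l ∈ S, x l) * selbergDensity α β γ x) (unitCubeMeasure n) :=
  integrable_prod_mul_unitCubeMeasure (integrable_selbergDensity hα hβ hγ) S

lemma integrable_sum_aomotoKernel (hα : -1 < α) (hβ : -1 < β) (hγ : 0 < γ)
    (S : Finset (Fin (n + 1))) (i : Fin (n + 1)) :
    Integrable (fun x => ∑ j ∈ {i}ᶜ, aomotoKernel α β γ S i j x) (unitCubeMeasure (n + 1)) :=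
  integrable_finsetSum _ fun _ hj => integrable_aomotoKernel hα hβ hγ S (by simpa using hj)

lemma integrable_aomotoDeriv (hα : -1 < α) (hβ : -1 < β) (hγ : 0 < γ)
    (S : Finset (Fin (n + 1))) (i : Fin (n + 1)) :
    Integrable (aomotoDeriv α β γ S i) (unitCubeMeasure (n + 1)) :=
  (((integrable_prod_mul_selbergDensity hα hβ hγ.le S).const_mul _).sub
    ((integrable_prod_mul_selbergDensity hα hβ hγ.le (insert i S)).const_mul _)).add
    ((integrable_sum_aomotoKernel hα hβ hγ S i).const_mul _)

lemma integral_aomotoDeriv (hα : -1 < α) (hβ : -1 < β) (hγ : 0 < γ)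
    (S : Finset (Fin (n + 1))) (i : Fin (n + 1)) :
    ∫ x, aomotoDeriv α β γ S i x ∂unitCubeMeasure (n + 1) =
      (α + 1) * selbergMoment α β γ S - (α + β + 2) * selbergMoment α β γ (insert i S) +
        2 * γ * ∑ j ∈ {i}ᶜ, ∫ x, aomotoKernel α β γ S i j x ∂unitCubeMeasure (n + 1) := by
  have hS := (integrable_prod_mul_selbergDensity hα hβ hγ.le S).const_mul (α + 1)
  have hiS := (integrable_prod_mul_selbergDensity hα hβ hγ.le (insert i S)).const_mul (α + β + 2)
  have hK := (integrable_sum_aomotoKernel hα hβ hγ S i).const_mul (2 * γ)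
  refine (integral_add (hS.sub hiS) hK).trans ?_
  rw [integral_sub' hS hiS, integral_const_mul, integral_const_mul, integral_const_mul,
    integral_finsetSum _ fun _ hj =>
      integrable_aomotoKernel hα hβ hγ S (by simpa using hj)]
  rfl

lemma aomotoDeriv_insertNth {S : Finset (Fin (n + 1))} {i : Fin (n + 1)} (hi : i ∉ S) (t : ℝ)
    (y : Fin n → ℝ) :
    aomotoDeriv α β γ S i (i.insertNth t y : Fin (n + 1) → ℝ) =
      (∏ l with i.succAbove l ∈ S, y l) * selbergDensity α β γ y *
        selbergSliceDeriv α β γ y t := by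
  simp only [aomotoDeriv, aomotoKernel, selbergSliceDeriv, selbergDensity_insertNth,
    Finset.prod_insert hi, prod_insertNth_of_notMem hi, Fin.insertNth_apply_same,
    ← Fin.image_succAbove_univ, Finset.sum_image i.succAbove_right_injective.injOn,
    Fin.insertNth_apply_succAbove, div_eq_mul_inv, ← Finset.mul_sum]
  ring

lemma integral_aomotoDeriv_eq_zero (hα : -1 < α) (hβ : -1 < β) (hγ : 0 < γ)
    {S : Finset (Fin (n + 1))} {i : Fin (n + 1)} (hi : i ∉ S) :
    ∫ x, aomotoDeriv α β γ S i x ∂unitCubeMeasure (n + 1) = 0 := by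
  have hint := integrable_aomotoDeriv hα hβ hγ S i
  rw [integral_pi_eq_integral_integral_insertNth i hint]
  refine integral_eq_zero_of_ae ?_
  filter_upwards [((integrable_comp_insertNth_iff i).2 hint).prod_left_ae] with y hy
  simp only [aomotoDeriv_insertNth hi] at hy ⊢
  rw [integral_const_mul, Pi.zero_apply, mul_eq_zero, or_iff_not_imp_left]
  intro hne
  exact integral_selbergSliceDeriv_eq_zero hα hβ hγ.le
    ((integrable_const_mul_iff (IsUnit.mk0 _ hne) _).1 hy)

lemma two_mul_integral_mul_selbergDensity_div_sub (hγ : γ ≠ 0) {i j : Fin n} (hij : i ≠ j)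
    {f q : (Fin n → ℝ) → ℝ}
    (hint : Integrable (fun x => f x * selbergDensity α β γ x / (x i - x j)) (unitCubeMeasure n))
    (hfq : ∀ x, f x - f (x ∘ Equiv.swap i j) = (x i - x j) * q x) :
    2 * ∫ x, f x * selbergDensity α β γ x / (x i - x j) ∂unitCubeMeasure n =
      ∫ x, q x * selbergDensity α β γ x ∂unitCubeMeasure n := by
  rw [two_mul_integral_pi_eq_integral_add_comp_perm (Equiv.swap i j) hint]
  congr 1 with x
  simp only [selbergDensity_comp_perm, Function.comp_apply, Equiv.swap_apply_left,
    Equiv.swap_apply_right]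
  rcases eq_or_ne (x i) (x j) with heq | hne
  · simp [selbergDensity_eq_zero_of_eq hγ hij heq]
  · have hsub : x i - x j ≠ 0 := sub_ne_zero.2 hne
    rw [← neg_sub (x i), div_neg, ← sub_eq_add_neg, ← sub_div, ← sub_mul, hfq,
      mul_assoc, mul_div_cancel_left₀ _ hsub]

lemma selbergMoment_insert_eq {S : Finset (Fin n)} {i j : Fin n} (hi : i ∉ S) (hj : j ∉ S) :
    selbergMoment α β γ (insert j S) = selbergMoment α β γ (insert i S) := by
  rw [selbergMoment, selbergMoment, ← integral_pi_comp_perm (Equiv.swap i j)]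
  simp only [Finset.prod_insert hi, Finset.prod_insert hj, selbergDensity_comp_perm,
    prod_comp_swap_of_notMem hi hj]
  simp only [Function.comp_apply, Equiv.swap_apply_right]

lemma two_mul_integral_aomotoKernel_of_mem (hα : -1 < α) (hβ : -1 < β) (hγ : 0 < γ)
    {S : Finset (Fin (n + 1))} {i j : Fin (n + 1)} (hi : i ∉ S) (hj : j ∈ S) :
    2 * ∫ x, aomotoKernel α β γ S i j x ∂unitCubeMeasure (n + 1) =
      -selbergMoment α β γ (insert i S) := by
  have hji : j ≠ i := ne_of_mem_of_not_mem hj hi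
  rw [selbergMoment, ← integral_neg]
  simp only [← neg_mul]
  refine two_mul_integral_mul_selbergDensity_div_sub hγ.ne' hji.symm
    (integrable_aomotoKernel hα hβ hγ S hji) fun x => ?_
  have hiS : i ∉ S.erase j := fun h => hi (Finset.mem_of_mem_erase h)
  rw [Finset.prod_insert hi, ← Finset.mul_prod_erase S _ hj, ← Finset.mul_prod_erase S _ hj,
    prod_comp_swap_of_notMem hiS (Finset.notMem_erase j S)]
  simp only [Function.comp_apply, Equiv.swap_apply_left, Equiv.swap_apply_right]
  ring

lemma two_mul_integral_aomotoKernel_of_notMem (hα : -1 < α) (hβ : -1 < β) (hγ : 0 < γ)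
    {S : Finset (Fin (n + 1))} {i j : Fin (n + 1)} (hi : i ∉ S) (hj : j ∉ S) (hji : j ≠ i) :
    2 * ∫ x, aomotoKernel α β γ S i j x ∂unitCubeMeasure (n + 1) =
      selbergMoment α β γ S - 2 * selbergMoment α β γ (insert i S) := by
  have hint := integrable_prod_mul_selbergDensity (n := n + 1) hα hβ hγ.le
  calc 2 * ∫ x, aomotoKernel α β γ S i j x ∂unitCubeMeasure (n + 1)
      = ∫ x, (∏ l ∈ S, x l - ∏ l ∈ insert i S, x l - ∏ l ∈ insert j S, x l) *
          selbergDensity α β γ x ∂unitCubeMeasure (n + 1) := by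
        refine two_mul_integral_mul_selbergDensity_div_sub hγ.ne' hji.symm
          (integrable_aomotoKernel hα hβ hγ S hji) fun x => ?_
        rw [prod_comp_swap_of_notMem hi hj, Finset.prod_insert hi, Finset.prod_insert hj]
        simp only [Function.comp_apply, Equiv.swap_apply_left]
        ring
    _ = selbergMoment α β γ S - selbergMoment α β γ (insert i S) -
          selbergMoment α β γ (insert j S) := by
        simp only [sub_mul]
        refine (integral_sub ((hint S).sub (hint _)) (hint _)).trans ?_
        rw [integral_sub' (hint S) (hint _)]
        rfl
    _ = selbergMoment α β γ S - 2 * selbergMoment α β γ (insert i S) := by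
        rw [selbergMoment_insert_eq hi hj]
        ring

lemma two_mul_sum_integral_aomotoKernel (hα : -1 < α) (hβ : -1 < β) (hγ : 0 < γ)
    {S : Finset (Fin (n + 1))} {i : Fin (n + 1)} (hi : i ∉ S) :
    2 * ∑ j ∈ {i}ᶜ, ∫ x, aomotoKernel α β γ S i j x ∂unitCubeMeasure (n + 1) =
      (n - S.card) * selbergMoment α β γ S -
        (2 * n - S.card) * selbergMoment α β γ (insert i S) := by
  have hsub : S ⊆ {i}ᶜ := fun l hl => by simpa using ne_of_mem_of_not_mem hl hi
  have hcard : (({i}ᶜ \ S).card : ℝ) = n - S.card := by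
    rw [Finset.cast_card_sdiff hsub, Finset.card_compl, Finset.card_singleton, Fintype.card_fin,
      Nat.add_sub_cancel]
  have hout : ∀ j ∈ {i}ᶜ \ S, 2 * ∫ x, aomotoKernel α β γ S i j x ∂unitCubeMeasure (n + 1) =
      selbergMoment α β γ S - 2 * selbergMoment α β γ (insert i S) := fun j hj =>
    two_mul_integral_aomotoKernel_of_notMem hα hβ hγ hi (Finset.mem_sdiff.1 hj).2
      (by simpa using (Finset.mem_sdiff.1 hj).1)
  rw [Finset.mul_sum, ← Finset.sum_sdiff hsub, Finset.sum_congr rfl hout, Finset.sum_congr rfl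
    fun j hj => two_mul_integral_aomotoKernel_of_mem hα hβ hγ hi hj, Finset.sum_const,
    Finset.sum_const, nsmul_eq_mul, nsmul_eq_mul, hcard]
  ring

lemma selbergMoment_insert (hα : -1 < α) (hβ : -1 < β) (hγ : 0 < γ)
    {S : Finset (Fin (n + 1))} {i : Fin (n + 1)} (hi : i ∉ S) :
    selbergMoment α β γ (insert i S) * (α + β + 2 + (2 * n - S.card) * γ) =
      selbergMoment α β γ S * (α + 1 + (n - S.card) * γ) := by
  have hparts := integral_aomotoDeriv_eq_zero hα hβ hγ hi
  rw [integral_aomotoDeriv hα hβ hγ] at hparts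
  linear_combination γ * two_mul_sum_integral_aomotoKernel hα hβ hγ hi - hparts

lemma selbergMoment_eq_prod_mul (hα : -1 < α) (hβ : -1 < β) (hγ : 0 < γ)
    (S : Finset (Fin (n + 1))) :
    selbergMoment α β γ S =
      (∏ j ∈ Finset.range S.card,
        (α + 1 + ((n : ℝ) - j) * γ) / (α + β + 2 + (2 * (n : ℝ) - j) * γ)) *
        selbergMoment α β γ (∅ : Finset (Fin (n + 1))) := by
  induction S using Finset.induction_on with
  | empty => simp
  | insert i S hi ih =>
    have hcard : (S.card : ℝ) ≤ 2 * n := by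
      have hlt := Finset.card_lt_univ_of_notMem hi
      rw [Fintype.card_fin] at hlt
      exact_mod_cast (show S.card ≤ 2 * n by omega)
    have hden : 0 < α + β + 2 + (2 * (n : ℝ) - S.card) * γ := by
      have := mul_nonneg (sub_nonneg.2 hcard) hγ.le
      linarith
    rw [Finset.card_insert_of_notMem hi, Finset.prod_range_succ, mul_right_comm, ← ih,
      ← mul_div_assoc, eq_div_iff hden.ne', selbergMoment_insert hα hβ hγ hi]

end Recursion

/-- the Aomoto–Selberg average
`⟨x₁⋯x_m⟩ = ∏_{j=1}^m (α + 1 + (n−j)γ)/(α + β + 2 + (2n−j−1)γ)`. -/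
theorem statement14 (n m : ℕ) (hn : 1 ≤ n) (hm : 1 ≤ m) (hmn : m ≤ n)
    (α β γ : ℝ) (hα : -1 < α) (hβ : -1 < β) (hγ : 0 < γ) :
    (∫ x in Set.univ.pi fun _ : Fin n => Set.Icc (0 : ℝ) 1,
        (∏ j ∈ Finset.univ.filter fun j : Fin n => (j : ℕ) < m, x j) *
          |vdm x| ^ (2 * γ) * ∏ j, (x j ^ α * (1 - x j) ^ β)) /
      (∫ x in Set.univ.pi fun _ : Fin n => Set.Icc (0 : ℝ) 1,
        |vdm x| ^ (2 * γ) * ∏ j, (x j ^ α * (1 - x j) ^ β)) =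
    ∏ j ∈ Finset.range m,
      (α + 1 + ((n : ℝ) - 1 - j) * γ) / (α + β + 2 + (2 * (n : ℝ) - j - 2) * γ) := by
  obtain ⟨k, rfl⟩ := Nat.exists_eq_add_of_le' hn
  have hcard : (Finset.univ.filter fun j : Fin (k + 1) => (j : ℕ) < m).card = m := by
    rw [Fin.card_filter_val_lt, min_eq_right hmn]
  have hmoment := selbergMoment_eq_prod_mul hα hβ hγ
    (Finset.univ.filter fun j : Fin (k + 1) => (j : ℕ) < m)
  have hpos := integral_selbergDensity_pos (n := k + 1) hα hβ hγ.le
  simp only [selbergMoment, Finset.prod_empty, one_mul, hcard, selbergDensity, ← mul_assoc,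
    unitCubeMeasure_eq_restrict_Icc] at hmoment hpos
  rw [div_eq_iff hpos.ne', hmoment]
  congr 1
  refine Finset.prod_congr rfl fun j _ => ?_
  push_cast
  congr 1 <;> ring

end
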